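/- Suppose that X is an analytic metric space and φ : ℕ^ℕ_* ∖ ℕ^ℕ → X. Then there is a ∧-embedding π : ℕ^{<ℕ} → ℕ^{<ℕ} such that one of the following holds: φ ∘ π̂ is constant; φ ∘ π̂ extends to an injective continuous closed map into X defined on ℕ^ℕ_* ∖ ℕ^ℕ or on ℕ^ℕ_*; or φ ∘ π̂ ∘ p⁻¹ (as a function on ℕ^{<ℕ}) extends to an injective continuous closed map into X defined on one of the following spaces: the discrete space ℕ^{<ℕ}, the one-point compactification ℕ^{<ℕ} ∪ {∞} of the discrete space ℕ^{<ℕ}, the subspace ℕ^{≤ℕ}_* ∖ ℕ^ℕ, the subspace ℕ^{≤ℕ} = ℕ^{<ℕ} ∪ ℕ^ℕ of ℕ^{≤ℕ}_*, or ℕ^{≤ℕ}_* itself. -/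

import Mathlib

open Set Topology TopologicalSpace
open scoped ENNReal

/-- `t` is an initial segment of `b : ℕ → ℕ`. -/
def PrefixFun (t : List ℕ) (b : ℕ → ℕ) : Prop :=
  ∀ (i : ℕ) (h : i < t.length), t.get ⟨i, h⟩ = b i

/-- The meet `s ∧ t`: the longest common initial segment of two finite sequences. -/
def listMeet : List ℕ → List ℕ → List ℕ
  | a :: s, b :: t => if a = b then a :: listMeet s t else []
  | _, _ => []

/-- A `∧`-embedding: an injection preserving meets. -/
def MeetEmbedding (π : List ℕ → List ℕ) : Prop :=
  Function.Injective π ∧ ∀ s t, π (listMeet s t) = listMeet (π s) (π t)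

/-- The induced map on Baire space: `limSeq π b = ⋃ i, π (b ↾ i)`. -/
def limSeq (π : List ℕ → List ℕ) (b : ℕ → ℕ) : ℕ → ℕ := fun n =>
  (π (List.ofFn fun i : Fin (n + 1) => b i)).getD n 0

/-- Points of the space `ℕ^{≤ℕ}_*`: finite sequences, infinite sequences, and
finite sequences followed by `∞`. -/
inductive NStar : Type
  | fin : List ℕ → NStar
  | inf : (ℕ → ℕ) → NStar
  | lim : List ℕ → NStar

namespace NStar

/-- `t ⊑ c`. -/
def PrefixOf (t : List ℕ) : NStar → Prop
  | fin s => t <+: s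
  | inf b => PrefixFun t b
  | lim s => t <+: s

/-- The basic "cylinder" `N_t = {c | t ⊑ c}`. -/
def cyl (t : List ℕ) : Set NStar := {c | PrefixOf t c}

/-- The smallest topology in which every `{t}` and every `N_t` is clopen. -/
instance : TopologicalSpace NStar :=
  TopologicalSpace.generateFrom
    {S | ∃ t : List ℕ, S = {fin t} ∨ S = ({fin t} : Set NStar)ᶜ ∨ S = cyl t ∨ S = (cyl t)ᶜ}

def IsFin (c : NStar) : Prop := ∃ t, c = fin t
def IsInf (c : NStar) : Prop := ∃ b, c = inf b
def IsLim (c : NStar) : Prop := ∃ t, c = lim t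

/-- The extension of `π : ℕ^{<ℕ} → ℕ^{<ℕ}` to `ℕ^{≤ℕ}_*`. -/
def hat (π : List ℕ → List ℕ) : NStar → NStar
  | fin t => fin (π t)
  | inf b => inf (limSeq π b)
  | lim t => lim (π t)

end NStar

/-- `ℕ^ℕ_* = ℕ^{≤ℕ}_* ∖ ℕ^{<ℕ}`. -/
abbrev NNStar : Type := {c : NStar // ¬ c.IsFin}
/-- `ℕ^ℕ_* ∖ ℕ^ℕ = {t⌢⟨∞⟩ : t ∈ ℕ^{<ℕ}}`. -/
abbrev NLim : Type := {c : NStar // c.IsLim}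
/-- The copy of `ℕ^{<ℕ}` inside `ℕ^{≤ℕ}_*` (a discrete subspace). -/
abbrev NFin : Type := {c : NStar // c.IsFin}
/-- `ℕ^{≤ℕ} = ℕ^{<ℕ} ∪ ℕ^ℕ`. -/
abbrev NFinInf : Type := {c : NStar // ¬ c.IsLim}
/-- `ℕ^{≤ℕ}_* ∖ ℕ^ℕ`. -/
abbrev NFinLim : Type := {c : NStar // ¬ c.IsInf}

def infPt (b : ℕ → ℕ) : NNStar :=
  ⟨NStar.inf b, by rintro ⟨t, h⟩; exact NStar.noConfusion h⟩

def limPt (t : List ℕ) : NLim := ⟨NStar.lim t, t, rfl⟩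

def finPt (t : List ℕ) : NFin := ⟨NStar.fin t, t, rfl⟩

/-- The extension `π̂` restricted to `ℕ^ℕ_*`. -/
def hatNN (π : List ℕ → List ℕ) (c : NNStar) : NNStar :=
  ⟨c.1.hat π, by
    obtain ⟨c, hc⟩ := c
    cases c with
    | fin t => exact fun _ => hc ⟨t, rfl⟩
    | inf b => rintro ⟨t, h⟩; exact NStar.noConfusion h
    | lim t => rintro ⟨s, h⟩; exact NStar.noConfusion h⟩

/-- The extension `π̂` restricted to `ℕ^ℕ_* ∖ ℕ^ℕ`. -/
def hatLim (π : List ℕ → List ℕ) (c : NLim) : NLim :=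
  ⟨c.1.hat π, by obtain ⟨c, t, rfl⟩ := c; exact ⟨π t, rfl⟩⟩

def NLim.toNN (c : NLim) : NNStar :=
  ⟨c.1, by obtain ⟨c, t, rfl⟩ := c; rintro ⟨s, h⟩; exact NStar.noConfusion h⟩

def NLim.base (c : NLim) : List ℕ :=
  match c.1 with
  | .lim t => t
  | .fin t => t
  | .inf _ => []

/-- The map `p : t⌢⟨∞⟩ ↦ t`, with values in the discrete copy of `ℕ^{<ℕ}`. -/
def pFin (c : NLim) : NFin := finPt c.base

def NFin.toFinLim (c : NFin) : NFinLim :=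
  ⟨c.1, by obtain ⟨c, t, rfl⟩ := c; rintro ⟨b, h⟩; exact NStar.noConfusion h⟩

def NFin.toFinInf (c : NFin) : NFinInf :=
  ⟨c.1, by obtain ⟨c, t, rfl⟩ := c; rintro ⟨s, h⟩; exact NStar.noConfusion h⟩

/-- A closed continuous embedding of `φ` into `φ'`: a pair of injective continuous closed
maps `πX : X → X'` and `πY : cl(φ[X]) → cl(φ'[X'])` with `φ' ∘ πX = πY ∘ φ`. -/
def ClosedContinuousEmbedding {X Y X' Y' : Type*} [TopologicalSpace X] [TopologicalSpace Y]
    [TopologicalSpace X'] [TopologicalSpace Y'] (φ : X → Y) (φ' : X' → Y') : Prop :=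
  ∃ (πX : X → X') (πY : closure (Set.range φ) → closure (Set.range φ')),
    Continuous πX ∧ Function.Injective πX ∧ IsClosedMap πX ∧
    Continuous πY ∧ Function.Injective πY ∧ IsClosedMap πY ∧
    ∀ x : X, φ' (πX x) = (πY ⟨φ x, subset_closure ⟨x, rfl⟩⟩ : Y')

/-- A topological space is analytic if it is a continuous image of a closed subset of `ℕ^ℕ`. -/
def IsAnalytic (X : Type*) [TopologicalSpace X] : Prop :=
  ∃ C : Set (ℕ → ℕ), IsClosed C ∧ ∃ f : C → X, Continuous f ∧ Function.Surjective f

/-- Baire measurable: preimages of open sets have the Baire property. -/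
def BaireMeasurableFun {X Y : Type*} [TopologicalSpace X] [TopologicalSpace Y]
    (φ : X → Y) : Prop :=
  ∀ V : Set Y, IsOpen V → ∃ U : Set X, IsOpen U ∧ IsMeagre (symmDiff (φ ⁻¹' V) U)

/-- Baire class one: preimages of open sets are `Fσ`. -/
def BaireClassOneFun {X Y : Type*} [TopologicalSpace X] [TopologicalSpace Y]
    (φ : X → Y) : Prop :=
  ∀ V : Set Y, IsOpen V → ∃ F : ℕ → Set X, (∀ n, IsClosed (F n)) ∧ φ ⁻¹' V = ⋃ n, F n

/-- σ-continuous with closed witnesses. -/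
def SigmaContClosed {X Y : Type*} [TopologicalSpace X] [TopologicalSpace Y]
    (φ : X → Y) : Prop :=
  ∃ F : ℕ → Set X, (∀ n, IsClosed (F n)) ∧ (⋃ n, F n) = Set.univ ∧ ∀ n, ContinuousOn φ (F n)

/-- Borel: preimages of open sets are Borel. -/
def BorelFun {X Y : Type*} [TopologicalSpace X] [TopologicalSpace Y] (φ : X → Y) : Prop :=
  ∀ V : Set Y, IsOpen V → @MeasurableSet X (borel X) (φ ⁻¹' V)

/-- The function on `ℕ^ℕ_*` agreeing with `f` on `ℕ^ℕ` and with `g` on `ℕ^ℕ_* ∖ ℕ^ℕ`,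
with values in the topological disjoint union. -/
def combine2 {A B : Type*} (f : (ℕ → ℕ) → A) (g : NLim → B) : NNStar → A ⊕ B := fun c =>
  match c with
  | ⟨.fin t, h⟩ => absurd ⟨t, rfl⟩ h
  | ⟨.inf b, _⟩ => Sum.inl (f b)
  | ⟨.lim t, _⟩ => Sum.inr (g (limPt t))

/-!
`X` embeds as an analytic set `R` in the Hilbert cube, so the values of `φ` may be viewed as a
function `f` on finite sequences with values in a compact metric space. Compactness allows one to
pass to a `∧`-embedding along which `f` extends to a continuous function `F` on the compact space
`ℕ^{≤ℕ}_*`. Further `∧`-embeddings make the behaviour of `F` uniform: it is constant or injective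
on `ℕ^{<ℕ}`; it is constant on the points `t⌢⟨∞⟩`, or else the only identification it can make is
of `t` with `t⌢⟨∞⟩`; and the points `t⌢⟨∞⟩`, like the infinite branches, are all sent into `R` or
all sent outside `R`. Analyticity is what settles the branches: some `∧`-embedding has all its
branches outside a given meagre subset of the Baire space, and some `∧`-embedding has all its
branches inside a given nonmeagre analytic one. If `F` is not constant on `ℕ^{<ℕ}`, it then induces
an embedding of a compact space, whose restriction to the preimage of `R` is the required closed
map into `X`.
-/

open Filter

/-! ### Finite sequences, meets and limits of sequences -/

section Prefix

variable {α : Type*} {s t u : List α} {i j : α}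

lemma exists_concat_prefix (h : u <+: s) (hne : u ≠ s) : ∃ i, u ++ [i] <+: s := by
  obtain ⟨r, rfl⟩ := h
  cases r with
  | nil => simp at hne
  | cons a r => exact ⟨a, by simp⟩

lemma concat_prefix_inj (hi : u ++ [i] <+: s) (hj : u ++ [j] <+: s) : i = j := by
  have h : u ++ [i] = u ++ [j] :=
    (List.prefix_of_prefix_length_le hi hj (by simp)).eq_of_length (by simp)
  simpa using h

lemma not_concat_prefix_self (t : List α) (i : α) : ¬ t ++ [i] <+: t := fun h => by
  simpa using h.length_le

lemma rel_of_prefix {β : Type*} {r : β → β → Prop} (refl : ∀ a, r a a)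
    (trans : ∀ {a b c}, r a b → r b c → r a c) {g : List α → β}
    (step : ∀ t i, r (g t) (g (t ++ [i]))) (h : s <+: t) : r (g s) (g t) := by
  obtain ⟨l, rfl⟩ := h
  induction l using List.reverseRecOn with
  | nil => simpa using refl (g s)
  | append_singleton l i ih => simpa using trans ih (step (s ++ l) i)

end Prefix

section InitSeg

variable {s t : List ℕ} {b : ℕ → ℕ}

/-- The initial segment `b ↾ n` of an infinite sequence. -/
def initSeg (b : ℕ → ℕ) (n : ℕ) : List ℕ := List.ofFn fun i : Fin n => b i

@[simp]
lemma length_initSeg (b : ℕ → ℕ) (n : ℕ) : (initSeg b n).length = n := by simp [initSeg]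

lemma initSeg_succ (b : ℕ → ℕ) (n : ℕ) : initSeg b (n + 1) = initSeg b n ++ [b n] := by
  simp only [initSeg, List.ofFn_succ_last, Fin.val_castSucc, Fin.val_last]

lemma initSeg_mono (b : ℕ → ℕ) {m n : ℕ} (h : m ≤ n) : initSeg b m <+: initSeg b n := by
  induction n, h using Nat.le_induction with
  | base => exact List.prefix_rfl
  | succ n _ ih => rw [initSeg_succ]; exact ih.trans (List.prefix_append _ _)

lemma prefixFun_iff : PrefixFun t b ↔ t = initSeg b t.length := by
  refine ⟨fun h => List.ext_getElem (by simp) fun i hi _ => by simpa [initSeg] using h i hi,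
    fun h i hi => ?_⟩
  have getElem_eq : t[i]? = (initSeg b t.length)[i]? := by rw [← h]
  simpa [initSeg, hi] using getElem_eq

lemma prefixFun_initSeg (b : ℕ → ℕ) (n : ℕ) : PrefixFun (initSeg b n) b := by
  rw [prefixFun_iff, length_initSeg]

lemma PrefixFun.mono (hst : s <+: t) (h : PrefixFun t b) : PrefixFun s b := fun i hi =>
  (hst.getElem hi).trans (h i (hi.trans_le hst.length_le))

lemma PrefixFun.prefix_initSeg {n : ℕ} (h : PrefixFun s b) (hn : s.length ≤ n) :
    s <+: initSeg b n := by
  rw [prefixFun_iff.1 h]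
  exact initSeg_mono b hn

lemma PrefixFun.prefix_or_prefix (hs : PrefixFun s b) (ht : PrefixFun t b) :
    s <+: t ∨ t <+: s :=
  List.prefix_or_prefix_of_prefix (hs.prefix_initSeg (le_max_left _ _))
    (ht.prefix_initSeg (le_max_right _ _))

lemma prefixFun_initSeg_iff {c : ℕ → ℕ} {n : ℕ} :
    PrefixFun (initSeg b n) c ↔ ∀ i < n, c i = b i := by
  simp [PrefixFun, initSeg, eq_comm]

end InitSeg

section ListMeet

variable {s t u : List ℕ} {i j : ℕ}

lemma prefix_listMeet_iff : u <+: listMeet s t ↔ u <+: s ∧ u <+: t := by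
  induction s generalizing u t with
  | nil => simp +contextual [listMeet]
  | cons a s ih =>
    cases t with
    | nil => simp +contextual [listMeet]
    | cons b t =>
      cases u with
      | nil => simp
      | cons c u =>
        by_cases h : a = b
        · simp only [listMeet, h, if_true, List.cons_prefix_cons, ih]
          tauto
        · simp only [listMeet, h, if_false, List.prefix_nil, List.cons_prefix_cons]
          grind

lemma listMeet_prefix_left (s t : List ℕ) : listMeet s t <+: s :=
  (prefix_listMeet_iff.1 List.prefix_rfl).1

lemma listMeet_prefix_right (s t : List ℕ) : listMeet s t <+: t :=
  (prefix_listMeet_iff.1 List.prefix_rfl).2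

lemma listMeet_eq_left (h : s <+: t) : listMeet s t = s :=
  antisymm (listMeet_prefix_left s t) (prefix_listMeet_iff.2 ⟨List.prefix_rfl, h⟩)

lemma listMeet_eq_right (h : t <+: s) : listMeet s t = t :=
  antisymm (listMeet_prefix_right s t) (prefix_listMeet_iff.2 ⟨h, List.prefix_rfl⟩)

lemma listMeet_eq_of_split (hij : i ≠ j) (hs : u ++ [i] <+: s) (ht : u ++ [j] <+: t) :
    listMeet s t = u := by
  have hu : u <+: listMeet s t := prefix_listMeet_iff.2
    ⟨(List.prefix_append _ _).trans hs, (List.prefix_append _ _).trans ht⟩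
  by_contra hne
  obtain ⟨k, hk⟩ := exists_concat_prefix hu (Ne.symm hne)
  exact hij ((concat_prefix_inj hs (hk.trans (listMeet_prefix_left s t))).trans
    (concat_prefix_inj (hk.trans (listMeet_prefix_right s t)) ht))

lemma prefix_or_prefix_or_split (s t : List ℕ) : s <+: t ∨ t <+: s ∨
    ∃ u i j, i ≠ j ∧ u ++ [i] <+: s ∧ u ++ [j] <+: t := by
  by_cases hs : listMeet s t = s
  · exact .inl (hs ▸ listMeet_prefix_right s t)
  by_cases ht : listMeet s t = t
  · exact .inr (.inl (ht ▸ listMeet_prefix_left s t))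
  obtain ⟨i, hi⟩ := exists_concat_prefix (listMeet_prefix_left s t) hs
  obtain ⟨j, hj⟩ := exists_concat_prefix (listMeet_prefix_right s t) ht
  refine .inr (.inr ⟨_, i, j, ?_, hi, hj⟩)
  rintro rfl
  exact not_concat_prefix_self _ i (prefix_listMeet_iff.2 ⟨hi, hj⟩)

end ListMeet

/-- A map of finite sequences under which every child of a node `t` strictly extends the image
of `t`; this is what makes the limit `limSeq g b` of `g (b ↾ n)` meaningful. -/
def StrictPrefixMono (g : List ℕ → List ℕ) : Prop :=
  ∀ t i, ∃ k, g t ++ [k] <+: g (t ++ [i])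

namespace StrictPrefixMono

variable {g : List ℕ → List ℕ} {s t : List ℕ}

lemma mono (hg : StrictPrefixMono g) (h : s <+: t) : g s <+: g t :=
  rel_of_prefix (fun _ => List.prefix_rfl) List.IsPrefix.trans
    (fun t i => (List.prefix_append _ _).trans (hg t i).choose_spec) h

lemma length_le (hg : StrictPrefixMono g) (t : List ℕ) : t.length ≤ (g t).length := by
  induction t using List.reverseRecOn with
  | nil => simp
  | append_singleton t i ih =>
    obtain ⟨k, hk⟩ := hg t i
    have := hk.length_le
    simp only [List.length_append, List.length_singleton] at this ⊢
    omega

lemma eq_of_prefix (hg : StrictPrefixMono g) (h : s <+: t) (e : g s = g t) : s = t := by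
  by_contra hne
  obtain ⟨i, hi⟩ := exists_concat_prefix h hne
  obtain ⟨k, hk⟩ := hg s i
  exact not_concat_prefix_self _ k (e ▸ hk.trans (hg.mono hi))

lemma prefixFun_limSeq (hg : StrictPrefixMono g) (b : ℕ → ℕ) (n : ℕ) :
    PrefixFun (g (initSeg b n)) (limSeq g b) := by
  intro i hi
  have hi' : i < (g (initSeg b (i + 1))).length :=
    Nat.lt_of_succ_le ((length_initSeg b (i + 1)).symm.trans_le (hg.length_le _))
  have hlim : limSeq g b i = (g (initSeg b (i + 1)))[i] := List.getD_eq_getElem _ 0 hi'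
  rw [hlim, List.get_eq_getElem]
  rcases le_total n (i + 1) with h | h
  · exact (hg.mono (initSeg_mono b h)).getElem hi
  · exact ((hg.mono (initSeg_mono b h)).getElem hi').symm

lemma initSeg_limSeq_prefix (hg : StrictPrefixMono g) (b : ℕ → ℕ) (n : ℕ) :
    initSeg (limSeq g b) n <+: g (initSeg b n) := by
  rw [prefixFun_iff.1 (hg.prefixFun_limSeq b n)]
  exact initSeg_mono _ ((length_initSeg b n).symm.trans_le (hg.length_le _))

lemma tendsto_limSeq (hg : StrictPrefixMono g) {b : ℕ → ℕ} {c : ℕ → ℕ → ℕ}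
    (hc : ∀ n, PrefixFun (g (initSeg b n)) (c n)) :
    Tendsto c atTop (𝓝 (limSeq g b)) := by
  refine tendsto_pi_nhds.2 fun i => tendsto_const_nhds.congr' ?_
  filter_upwards [eventually_gt_atTop i] with n hn
  have hcn := (hc n).mono (hg.initSeg_limSeq_prefix b n)
  exact (prefixFun_initSeg_iff.1 hcn i hn).symm

end StrictPrefixMono

namespace MeetEmbedding

variable {π ρ : List ℕ → List ℕ}

lemma strictPrefixMono (h : MeetEmbedding π) : StrictPrefixMono π := fun t i => by
  have hmono : π t <+: π (t ++ [i]) := by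
    have := h.2 t (t ++ [i])
    rw [listMeet_eq_left (List.prefix_append _ _)] at this
    exact this ▸ listMeet_prefix_right _ _
  exact exists_concat_prefix hmono fun e => by simpa using h.1 e

lemma comp (h : MeetEmbedding π) (h' : MeetEmbedding ρ) : MeetEmbedding (π ∘ ρ) :=
  ⟨h.1.comp h'.1, fun s t => by simp only [Function.comp_apply, h'.2, h.2]⟩

end MeetEmbedding

lemma meetEmbedding_of_split {π : List ℕ → List ℕ} {k : List ℕ → ℕ → ℕ}
    (hk : ∀ t, Function.Injective (k t)) (h : ∀ t i, π t ++ [k t i] <+: π (t ++ [i])) :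
    MeetEmbedding π := by
  have hπ : StrictPrefixMono π := fun t i => ⟨k t i, h t i⟩
  have meet : ∀ s t, π (listMeet s t) = listMeet (π s) (π t) := by
    intro s t
    rcases prefix_or_prefix_or_split s t with hst | hst | ⟨u, i, j, hij, hi, hj⟩
    · rw [listMeet_eq_left hst, listMeet_eq_left (hπ.mono hst)]
    · rw [listMeet_eq_right hst, listMeet_eq_right (hπ.mono hst)]
    · rw [listMeet_eq_of_split hij hi hj, listMeet_eq_of_split ((hk u).ne hij)
        ((h u i).trans (hπ.mono hi)) ((h u j).trans (hπ.mono hj))]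
  refine ⟨fun s t e => ?_, meet⟩
  have hs : π (listMeet s t) = π s := by rw [meet, ← e, listMeet_eq_left List.prefix_rfl]
  rw [← hπ.eq_of_prefix (listMeet_prefix_left s t) hs,
    hπ.eq_of_prefix (listMeet_prefix_right s t) (hs.trans e)]

/-! ### Fusion -/

/-- An enumeration of the finite sequences; sequences are reversed before encoding so that
parents precede their children. -/
def code (t : List ℕ) : ℕ := Encodable.encode t.reverse

lemma code_injective : Function.Injective code :=
  Encodable.encode_injective.comp List.reverse_injective

lemma code_lt_code_concat (t : List ℕ) (i : ℕ) : code t < code (t ++ [i]) := by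
  simpa [code, Encodable.encode_list_cons] using Nat.lt_succ_of_le (Nat.right_le_pair i _)

lemma finite_setOf_code_lt (n : ℕ) : {u | code u < n}.Finite :=
  (finite_lt_nat n).preimage code_injective.injOn

lemma exists_forall_of_wellFounded {α β : Type*} [Nonempty α] {r : β → β → Prop}
    (wf : WellFounded r) {P : β → (β → α) → α → Prop}
    (congr : ∀ {b g g' a}, (∀ c, r c b → g c = g' c) → P b g a → P b g' a)
    (h : ∀ b g, ∃ a, P b g a) : ∃ G : β → α, ∀ b, P b G (G b) := by
  classical
  choose next hnext using h
  let restrict (b : β) (ih : ∀ c, r c b → α) : β → α := fun c =>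
    if hc : r c b then ih c hc else Classical.arbitrary α
  refine ⟨wf.fix fun b ih => next b (restrict b ih), fun b => ?_⟩
  rw [wf.fix_eq]
  exact congr (fun c hc => dif_pos hc) (hnext b _)

lemma eventually_not_concat_prefix (t s : List ℕ) :
    ∀ᶠ k in atTop, ¬ t ++ [k] <+: s := by
  by_cases h : ∃ i, t ++ [i] <+: s
  · obtain ⟨i, hi⟩ := h
    filter_upwards [eventually_gt_atTop i] with k hk hks
    exact hk.ne (concat_prefix_inj hi hks)
  · exact .of_forall (not_exists.1 h)

lemma exists_history_recursion {S : Type*} [Nonempty S] {R : List ℕ → Set S → S → S → Prop}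
    (H : ∀ t A, A.Finite → ∀ s, ∃ s', R t A s s') :
    ∃ ρ : List ℕ → S, ∀ t i,
      R (t ++ [i]) (ρ '' {u | code u < code (t ++ [i])}) (ρ t) (ρ (t ++ [i])) := by
  let P (b : List ℕ) (g : List ℕ → S) (s' : S) : Prop :=
    ∀ t i, b = t ++ [i] → R b (g '' {u | code u < code b}) (g t) s'
  have step (b g) : ∃ s', P b g s' := by
    obtain rfl | ⟨t, i, rfl⟩ := List.eq_nil_or_concat' b
    · exact ⟨Classical.arbitrary S, fun t i h => by simp at h⟩
    obtain ⟨s', hs'⟩ := H (t ++ [i]) _ ((finite_setOf_code_lt (code (t ++ [i]))).image g) (g t)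
    refine ⟨s', fun t' i' e => ?_⟩
    rwa [← (List.append_inj' e rfl).1]
  have congr {b g g' s'} (hg : ∀ c, code c < code b → g c = g' c) (h : P b g s') :
      P b g' s' := by
    rintro t i rfl
    rw [← hg t (code_lt_code_concat t i), ← image_congr (s := {u | code u < code (t ++ [i])}) hg]
    exact h t i rfl
  obtain ⟨ρ, hρ⟩ := exists_forall_of_wellFounded (P := P) (measure code).wf congr step
  exact ⟨ρ, fun t i => hρ _ t i rfl⟩

/-- The new direction `k` must be one that no state of the finite history has taken. -/
theorem fusion {S : Type*} [Nonempty S] {pos : S → List ℕ}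
    {Q : List ℕ → Set S → S → S → Prop}
    (H : ∀ t A, A.Finite → ∀ s N, ∃ s', ∃ k ≥ N, pos s ++ [k] <+: pos s' ∧ Q t A s s') :
    ∃ ρ : List ℕ → S, MeetEmbedding (pos ∘ ρ) ∧
      ∀ t i, Q (t ++ [i]) (ρ '' {u | code u < code (t ++ [i])}) (ρ t) (ρ (t ++ [i])) := by
  obtain ⟨ρ, hρ⟩ := exists_history_recursion (S := S)
    (R := fun t A s s' => ∃ k, pos s ++ [k] <+: pos s' ∧
      (∀ a ∈ A, ¬ pos s ++ [k] <+: pos a) ∧ Q t A s s') fun t A hA s => by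
    obtain ⟨N, hN⟩ := eventually_atTop.1 <| hA.eventually_all.2 fun a _ =>
      eventually_not_concat_prefix (pos s) (pos a)
    obtain ⟨s', k, hk, hpos, hQ⟩ := H t A hA s N
    exact ⟨s', k, hpos, fun a ha => hN k hk a ha, hQ⟩
  choose k hk fresh hQ using hρ
  refine ⟨ρ, meetEmbedding_of_split (k := k) (fun t i j e => ?_) hk, hQ⟩
  by_contra hij
  have hcode := code_injective.ne (a₁ := t ++ [i]) (a₂ := t ++ [j]) (by simpa)
  rcases lt_or_gt_of_ne hcode with hlt | hlt
  · exact fresh t j _ (mem_image_of_mem ρ hlt) (e ▸ hk t i)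
  · exact fresh t i _ (mem_image_of_mem ρ hlt) (e ▸ hk t j)

/-! ### Somewhere dense sets and colourings -/

/-- Every extension of `u` can be further extended into `D`. -/
def DenseBelow (D : Set (List ℕ)) (u : List ℕ) : Prop :=
  ∀ v, u <+: v → ∃ w ∈ D, v <+: w

/-- A property that holds everywhere or nowhere. -/
def AllOrNone {ι : Type*} (P : ι → Prop) : Prop := (∀ i, P i) ∨ ∀ i, ¬ P i

lemma AllOrNone.comp {ι κ : Type*} {P : ι → Prop} (h : AllOrNone P) (f : κ → ι) :
    AllOrNone fun k => P (f k) :=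
  h.imp (fun h k => h (f k)) fun h k => h (f k)

namespace DenseBelow

variable {D E : Set (List ℕ)} {u v : List ℕ}

lemma mono (h : DenseBelow D u) (huv : u <+: v) : DenseBelow D v :=
  fun w hw => h w (huv.trans hw)

lemma left_or_right_of_union (h : DenseBelow (D ∪ E) u) :
    DenseBelow D u ∨ ∃ v, u <+: v ∧ DenseBelow E v := by
  refine or_iff_not_imp_left.2 fun hD => ?_
  simp only [DenseBelow, not_forall, not_exists, not_and] at hD
  obtain ⟨v, huv, hv⟩ := hD
  refine ⟨v, huv, fun w hvw => ?_⟩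
  obtain ⟨x, hx | hx, hwx⟩ := h w (huv.trans hvw)
  · exact absurd (hvw.trans hwx) (hv x hx)
  · exact ⟨x, hx, hwx⟩

lemma exists_of_biUnion {ι : Type*} {I : Set ι} (hI : I.Finite) {E : ι → Set (List ℕ)}
    (h : DenseBelow (⋃ i ∈ I, E i) u) : ∃ i ∈ I, ∃ v, u <+: v ∧ DenseBelow (E i) v := by
  induction I, hI using Set.Finite.induction_on generalizing u with
  | empty =>
    obtain ⟨w, hw, -⟩ := h u List.prefix_rfl
    simp at hw
  | @insert a I _ _ ih =>
    rw [biUnion_insert] at h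
    rcases h.left_or_right_of_union with ha | ⟨v, huv, hv⟩
    · exact ⟨a, mem_insert a I, u, List.prefix_rfl, ha⟩
    · obtain ⟨i, hi, w, hvw, hw⟩ := ih hv
      exact ⟨i, mem_insert_of_mem a hi, w, huv.trans hvw, hw⟩

lemma exists_meetEmbedding (h : DenseBelow D u) : ∃ π, MeetEmbedding π ∧ ∀ t, π t ∈ D := by
  obtain ⟨w, hwD, huw⟩ := h u List.prefix_rfl
  let S := {w // w ∈ D ∧ u <+: w}
  have : Nonempty S := ⟨w, hwD, huw⟩
  obtain ⟨ρ, hρ, -⟩ := fusion (S := S) (pos := Subtype.val) (Q := fun _ _ _ _ => True)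
    fun _ _ _ s N => by
      obtain ⟨w, hwD, hw⟩ := h (s.1 ++ [N]) (s.2.2.trans (List.prefix_append _ _))
      exact ⟨⟨w, hwD, s.2.2.trans ((List.prefix_append _ _).trans hw)⟩, N, le_rfl, hw, trivial⟩
  exact ⟨_, hρ, fun t => (ρ t).2.1⟩

end DenseBelow

lemma exists_meetEmbedding_allOrNone (P : List ℕ → Prop) :
    ∃ π, MeetEmbedding π ∧ AllOrNone fun t => P (π t) := by
  have h : DenseBelow ({t | P t} ∪ {t | ¬ P t}) [] :=
    fun v _ => ⟨v, em (P v), List.prefix_rfl⟩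
  rcases h.left_or_right_of_union with h | ⟨v, -, h⟩ <;>
    obtain ⟨π, hπ, hP⟩ := h.exists_meetEmbedding
  · exact ⟨π, hπ, .inl hP⟩
  · exact ⟨π, hπ, .inr hP⟩

theorem exists_meetEmbedding_const_or_injective {K : Type*} (g : List ℕ → K) :
    ∃ π, MeetEmbedding π ∧ ((∃ x, ∀ t, g (π t) = x) ∨ Function.Injective fun t => g (π t)) := by
  by_cases h : ∃ x u, DenseBelow (g ⁻¹' {x}) u
  · obtain ⟨x, u, h⟩ := h
    obtain ⟨π, hπ, hx⟩ := h.exists_meetEmbedding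
    exact ⟨π, hπ, .inl ⟨x, hx⟩⟩
  have avoid (A : Set (List ℕ)) (hA : A.Finite) (u : List ℕ) :
      ∃ v, u <+: v ∧ ∀ a ∈ A, g a ≠ g v := by
    by_contra! hu
    refine h ?_
    obtain ⟨a, -, v, -, hv⟩ := DenseBelow.exists_of_biUnion hA (E := fun a => g ⁻¹' {g a})
      (u := u) fun v huv => by
        obtain ⟨a, ha, e⟩ := hu v huv
        exact ⟨v, mem_biUnion ha e.symm, List.prefix_rfl⟩
    exact ⟨g a, v, hv⟩
  obtain ⟨ρ, hρ, hQ⟩ := fusion (pos := id) (Q := fun _ A _ s' => ∀ a ∈ A, g a ≠ g s')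
    fun _ A hA s N => by
      obtain ⟨v, hv, hvA⟩ := avoid A hA (s ++ [N])
      exact ⟨v, N, le_rfl, hv, hvA⟩
  have ne_of_lt {s t : List ℕ} (hst : code s < code t) : g (ρ s) ≠ g (ρ t) := by
    obtain rfl | ⟨t, i, rfl⟩ := List.eq_nil_or_concat' t
    · simp [code] at hst
    · exact hQ t i _ (mem_image_of_mem ρ hst)
  refine ⟨ρ, hρ, .inr fun s t e => ?_⟩
  by_contra hst
  rcases lt_or_gt_of_ne (code_injective.ne hst) with hlt | hlt
  · exact ne_of_lt hlt e
  · exact ne_of_lt hlt e.symm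

/-! ### The topology of `ℕ^{≤ℕ}_*` -/

lemma exists_branch {P : List ℕ → Prop} (nil : P []) (step : ∀ t, P t → ∃ i, P (t ++ [i])) :
    ∃ b, ∀ n, P (initSeg b n) := by
  choose! next hnext using step
  let g : ℕ → List ℕ := Nat.rec [] fun _ t => t ++ [next t]
  have initSeg_eq (n) : initSeg (fun n => next (g n)) n = g n := by
    induction n with
    | zero => rfl
    | succ n ih => rw [initSeg_succ, ih]
  refine ⟨fun n => next (g n), fun n => ?_⟩
  rw [initSeg_eq]
  induction n with
  | zero => exact nil
  | succ n ih => exact hnext _ ih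

lemma MeetEmbedding.exists_injective_concat_prefix {π : List ℕ → List ℕ} (h : MeetEmbedding π)
    (t : List ℕ) : ∃ k : ℕ → ℕ, Function.Injective k ∧ ∀ i, π t ++ [k i] <+: π (t ++ [i]) := by
  choose k hk using h.strictPrefixMono t
  refine ⟨k, fun i j e => ?_, hk⟩
  by_contra hij
  refine not_concat_prefix_self (π t) (k i) ?_
  have hmeet : π t = listMeet (π (t ++ [i])) (π (t ++ [j])) := by
    rw [← h.2, listMeet_eq_of_split hij List.prefix_rfl List.prefix_rfl]
  exact (prefix_listMeet_iff.2 ⟨hk i, e ▸ hk j⟩).trans (hmeet ▸ List.prefix_rfl)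

namespace NStar

variable {s t : List ℕ} {b : ℕ → ℕ} {c : NStar}

lemma isClopen_singleton_fin (t : List ℕ) : IsClopen {fin t} :=
  ⟨⟨isOpen_generateFrom_of_mem ⟨t, by simp⟩⟩, isOpen_generateFrom_of_mem ⟨t, by simp⟩⟩

lemma isClopen_cyl (t : List ℕ) : IsClopen (cyl t) :=
  ⟨⟨isOpen_generateFrom_of_mem ⟨t, by simp⟩⟩, isOpen_generateFrom_of_mem ⟨t, by simp⟩⟩

lemma cyl_nil : cyl [] = univ := by
  refine eq_univ_of_forall fun c => ?_
  cases c with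
  | inf b => exact prefixFun_initSeg b 0
  | _ s => exact s.nil_prefix

lemma cyl_anti (h : s <+: t) : cyl t ⊆ cyl s := fun c hc => by
  cases c with
  | inf b => exact PrefixFun.mono h hc
  | _ u => exact h.trans hc

lemma prefix_or_prefix_of_mem_cyl (hs : c ∈ cyl s) (ht : c ∈ cyl t) : s <+: t ∨ t <+: s := by
  cases c with
  | inf b => exact PrefixFun.prefix_or_prefix hs ht
  | _ u => exact List.prefix_or_prefix_of_prefix hs ht

lemma eq_or_exists_mem_cyl_concat (h : c ∈ cyl t) :
    c = fin t ∨ c = lim t ∨ ∃ i, c ∈ cyl (t ++ [i]) := by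
  cases c with
  | fin s =>
    rcases eq_or_ne t s with rfl | hne
    exacts [.inl rfl, .inr (.inr (exists_concat_prefix h hne))]
  | lim s =>
    rcases eq_or_ne t s with rfl | hne
    exacts [.inr (.inl rfl), .inr (.inr (exists_concat_prefix h hne))]
  | inf b =>
    refine .inr (.inr ⟨b t.length, ?_⟩)
    have ht : t ++ [b t.length] = initSeg b (t.length + 1) := by
      rw [initSeg_succ, ← prefixFun_iff.1 h]
    exact ht ▸ prefixFun_initSeg b _

lemma le_nhds_of_cyl {L : Filter NStar} (hc : ∀ s, c ≠ fin s) (hfin : ∀ s, {fin s}ᶜ ∈ L)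
    (hcyl : ∀ s, c ∈ cyl s → cyl s ∈ L) (hcyl' : ∀ s, c ∉ cyl s → (cyl s)ᶜ ∈ L) :
    L ≤ 𝓝 c := by
  refine (tendsto_nhds_generateFrom_iff (m := id)).2 ?_
  rintro _ ⟨s, rfl | rfl | rfl | rfl⟩ hcS
  exacts [absurd hcS (hc s), hfin s, hcyl s hcS, hcyl' s hcS]

lemma mem_nhds_lim {U : Set NStar} :
    U ∈ 𝓝 (lim t) ↔ lim t ∈ U ∧ ∀ᶠ k in atTop, cyl (t ++ [k]) ⊆ U := by
  constructor
  · suffices h : pure (lim t) ⊔ atTop.bind (fun k => 𝓟 (cyl (t ++ [k]))) ≤ 𝓝 (lim t) from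
      fun hU => (h hU).imp_right mem_bind'.1
    have mem {V : Set NStar} (hV : lim t ∈ V) (hV' : ∀ᶠ k in atTop, cyl (t ++ [k]) ⊆ V) :
        V ∈ pure (lim t) ⊔ atTop.bind fun k => 𝓟 (cyl (t ++ [k])) := ⟨hV, mem_bind'.2 hV'⟩
    refine le_nhds_of_cyl (by simp) (fun s => mem (by simp) ?_) (fun s hs => mem hs ?_)
      fun s hs => mem hs ?_
    · filter_upwards [eventually_not_concat_prefix t s] with k hk
      exact subset_compl_singleton_iff.2 hk
    · exact .of_forall fun k => cyl_anti (List.IsPrefix.trans hs (List.prefix_append _ _))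
    · filter_upwards [eventually_not_concat_prefix t s] with k hk c hck hcs
      rcases prefix_or_prefix_of_mem_cyl hck hcs with h | h
      · exact hk h
      · rcases List.prefix_concat_iff.1 h with h | h
        exacts [hk (h ▸ List.prefix_rfl), hs h]
  · rintro ⟨ht, hU⟩
    obtain ⟨N, hN⟩ := eventually_atTop.1 hU
    have avoid : ∀ᶠ c in 𝓝 (lim t), ∀ i < N, c ∉ cyl (t ++ [i]) :=
      (finite_lt_nat N).eventually_all.2 fun i _ =>
        (isClopen_cyl _).compl.isOpen.mem_nhds (not_concat_prefix_self t i)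
    filter_upwards [avoid, (isClopen_cyl t).isOpen.mem_nhds (List.prefix_rfl (l := t)),
      (isClopen_singleton_fin t).compl.isOpen.mem_nhds (by simp)] with c hN' hct hfin
    rcases eq_or_exists_mem_cyl_concat hct with rfl | rfl | ⟨i, hi⟩
    · exact absurd rfl hfin
    · exact ht
    · exact hN i (not_lt.1 fun hlt => hN' i hlt hi) hi

lemma mem_nhds_inf {U : Set NStar} :
    U ∈ 𝓝 (inf b) ↔ ∃ n, cyl (initSeg b n) ⊆ U := by
  constructor
  · suffices h : atTop.bind (fun n => 𝓟 (cyl (initSeg b n))) ≤ 𝓝 (inf b) from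
      fun hU => Eventually.exists (mem_bind'.1 (h hU))
    have mem {V : Set NStar} (n₀ : ℕ) (hV : ∀ n ≥ n₀, cyl (initSeg b n) ⊆ V) :
        V ∈ atTop.bind fun n => 𝓟 (cyl (initSeg b n)) :=
      mem_bind'.2 (eventually_atTop.2 ⟨n₀, hV⟩)
    refine le_nhds_of_cyl (by simp) (fun s => mem (s.length + 1) fun n hn => ?_)
      (fun s hs => mem s.length fun n hn => cyl_anti (PrefixFun.prefix_initSeg hs hn))
      fun s hs => mem s.length fun n hn c hcn hcs => hs ?_
    · refine subset_compl_singleton_iff.2 fun h => ?_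
      simpa using hn.trans ((length_initSeg b n).symm.trans_le (List.IsPrefix.length_le h))
    · refine (prefixFun_initSeg b n).mono ?_
      refine (prefix_or_prefix_of_mem_cyl hcs hcn).elim id fun h => ?_
      rw [h.eq_of_length_le (by simpa using hn)]
  · rintro ⟨n, hn⟩
    exact mem_of_superset ((isClopen_cyl _).isOpen.mem_nhds (prefixFun_initSeg b n)) hn

theorem continuous_of_eventually_mapsTo {K : Type*} [TopologicalSpace K] {F : NStar → K}
    (hlim : ∀ t, ∀ U ∈ 𝓝 (F (lim t)), ∀ᶠ i in atTop, MapsTo F (cyl (t ++ [i])) U)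
    (hinf : ∀ b, ∀ U ∈ 𝓝 (F (inf b)), ∃ n, MapsTo F (cyl (initSeg b n)) U) :
    Continuous F := by
  refine continuous_iff_continuousAt.2 fun c U hU => mem_map.2 ?_
  cases c with
  | fin t =>
    exact mem_of_superset ((isClopen_singleton_fin t).isOpen.mem_nhds rfl)
      (singleton_subset_iff.2 (mem_of_mem_nhds (s := U) hU))
  | lim t => exact mem_nhds_lim.2 ⟨mem_of_mem_nhds (s := U) hU, hlim t U hU⟩
  | inf b => exact mem_nhds_inf.2 (hinf b U hU)

lemma le_nhds_lim_of_ultrafilter {𝓤 : Ultrafilter NStar} (hfin : {fin t} ∉ 𝓤) (ht : cyl t ∈ 𝓤)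
    (hmax : ∀ i, cyl (t ++ [i]) ∉ 𝓤) : ↑𝓤 ≤ 𝓝 (lim t) := fun U hU => by
  obtain ⟨hUt, hU⟩ := mem_nhds_lim.1 hU
  obtain ⟨N, hN⟩ := eventually_atTop.1 hU
  have avoid : ∀ᶠ c in (𝓤 : Filter NStar), ∀ i < N, c ∉ cyl (t ++ [i]) :=
    (finite_lt_nat N).eventually_all.2 fun i _ => Ultrafilter.compl_mem_iff_notMem.2 (hmax i)
  filter_upwards [avoid, ht, Ultrafilter.compl_mem_iff_notMem.2 hfin] with c hN' hct hfin
  rcases eq_or_exists_mem_cyl_concat hct with rfl | rfl | ⟨i, hi⟩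
  · exact absurd rfl hfin
  · exact hUt
  · exact hN i (not_lt.1 fun hlt => hN' i hlt hi) hi

/-- Follow the cylinders in the ultrafilter as long as possible: they stop at the node whose
limit point is the limit, or else they trace out an infinite branch. -/
instance : CompactSpace NStar := by
  refine ⟨isCompact_iff_ultrafilter_le_nhds.2 fun 𝓤 _ => ?_⟩
  by_cases hfin : ∃ t, {fin t} ∈ 𝓤
  · obtain ⟨t, ht⟩ := hfin
    exact ⟨fin t, trivial, fun U hU =>
      mem_of_superset ht (singleton_subset_iff.2 (mem_of_mem_nhds hU))⟩
  by_cases hmax : ∃ t, cyl t ∈ 𝓤 ∧ ∀ i, cyl (t ++ [i]) ∉ 𝓤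
  · obtain ⟨t, ht, hmax⟩ := hmax
    exact ⟨lim t, trivial, le_nhds_lim_of_ultrafilter (not_exists.1 hfin t) ht hmax⟩
  · push Not at hmax
    obtain ⟨b, hb⟩ := exists_branch (P := fun t => cyl t ∈ 𝓤) (cyl_nil ▸ univ_mem) hmax
    refine ⟨inf b, trivial, fun U hU => ?_⟩
    obtain ⟨n, hn⟩ := mem_nhds_inf.1 hU
    exact mem_of_superset (hb n) hn

lemma mapsTo_hat_cyl {π : List ℕ → List ℕ} (hπ : MeetEmbedding π) (t : List ℕ) :
    MapsTo (hat π) (cyl t) (cyl (π t)) := by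
  intro c hc
  cases c with
  | inf b =>
    exact (hπ.strictPrefixMono.prefixFun_limSeq b t.length).mono
      (hπ.strictPrefixMono.mono (PrefixFun.prefix_initSeg hc le_rfl))
  | _ s => exact hπ.strictPrefixMono.mono hc

lemma continuous_hat {π : List ℕ → List ℕ} (hπ : MeetEmbedding π) : Continuous (hat π) := by
  refine continuous_of_eventually_mapsTo (fun t U hU => ?_) fun b U hU => ?_
  · obtain ⟨k, hk, hπk⟩ := hπ.exists_injective_concat_prefix t
    filter_upwards [hk.nat_tendsto_atTop.eventually (mem_nhds_lim.1 hU).2] with i hi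
    exact (mapsTo_hat_cyl hπ _).mono_right ((cyl_anti (hπk i)).trans hi)
  · obtain ⟨n, hn⟩ := mem_nhds_inf.1 hU
    exact ⟨n, (mapsTo_hat_cyl hπ _).mono_right
      ((cyl_anti (hπ.strictPrefixMono.initSeg_limSeq_prefix b n)).trans hn)⟩

lemma continuous_inf : Continuous inf := by
  refine continuous_iff_continuousAt.2 fun b U hU => mem_map.2 ?_
  obtain ⟨n, hn⟩ := mem_nhds_inf.1 hU
  refine mem_of_superset ((PiNat.isOpen_cylinder _ b n).mem_nhds (PiNat.self_mem_cylinder b n)) ?_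
  exact fun c hc => hn (prefixFun_initSeg_iff.2 hc)

end NStar

instance : DiscreteTopology NFin := discreteTopology_iff_isOpen_singleton.2 fun ⟨_, t, e⟩ => by
  refine ⟨_, (NStar.isClopen_singleton_fin t).isOpen, ?_⟩
  ext d
  simp [e, Subtype.ext_iff]

/-! ### Continuous extension -/

section Extension

variable {K : Type*} {D : Set (List ℕ)} {w : List ℕ}

lemma DenseBelow.exists_cluster_value [TopologicalSpace K] [CompactSpace K] (h : DenseBelow D w)
    (f : List ℕ → K) : ∃ x, ∀ U ∈ 𝓝 x, ∃ᶠ k in atTop, ∃ v, w ++ [k] <+: v ∧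
      DenseBelow (D ∩ f ⁻¹' U) v := by
  by_contra! hx
  choose U hU hk using hx
  obtain ⟨I, hI⟩ := CompactSpace.elim_nhds_subcover U hU
  obtain ⟨k, hk⟩ := (I.finite_toSet.eventually_all.2 fun x _ => hk x).exists
  have cover : D ⊆ ⋃ x ∈ (I : Set K), D ∩ f ⁻¹' U x := fun v hv => by
    obtain ⟨x, hx, hvx⟩ := mem_iUnion₂.1 (hI.ge (mem_univ (f v)))
    exact mem_biUnion hx ⟨hv, hvx⟩
  obtain ⟨x, hx, v, hkv, hv⟩ := DenseBelow.exists_of_biUnion I.finite_toSet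
    (E := fun x => D ∩ f ⁻¹' U x) (u := w ++ [k]) fun v hv => by
      obtain ⟨z, hz, hvz⟩ := h v ((List.prefix_append _ _).trans hv)
      exact ⟨z, cover hz, hvz⟩
  exact hk x hx v hkv hv

/-- A stage of the construction of a continuous extension of `f`: a node, a set of sequences
in which all later nodes will be chosen, and a value which `f` approximates on that set along
infinitely many directions out of the node. -/
structure ExtensionStage [TopologicalSpace K] (f : List ℕ → K) where
  node : List ℕ
  dense : Set (List ℕ)
  value : K
  node_mem : node ∈ dense
  frequently_denseBelow : ∀ U ∈ 𝓝 value, ∃ᶠ k in atTop, ∃ v, node ++ [k] <+: v ∧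
    DenseBelow (dense ∩ f ⁻¹' U) v

namespace ExtensionStage

variable [TopologicalSpace K] {f : List ℕ → K}

lemma exists_of_denseBelow [CompactSpace K] (f : List ℕ → K) (h : DenseBelow D w) :
    ∃ s : ExtensionStage f, w <+: s.node ∧ s.dense = D := by
  obtain ⟨v, hvD, hwv⟩ := h w List.prefix_rfl
  obtain ⟨x, hx⟩ := (h.mono hwv).exists_cluster_value f
  exact ⟨⟨v, D, x, hvD, hx⟩, hwv, rfl⟩

lemma value_mem_closure (s : ExtensionStage f) : s.value ∈ closure (f '' s.dense) := by
  refine mem_closure_iff_nhds.2 fun U hU => ?_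
  obtain ⟨_, v, -, hv⟩ := (s.frequently_denseBelow U hU).exists
  obtain ⟨w, ⟨hwD, hwU⟩, -⟩ := hv v List.prefix_rfl
  exact ⟨f w, hwU, mem_image_of_mem f hwD⟩

lemma exists_next [CompactSpace K] (s : ExtensionStage f) {U : Set K} (hU : U ∈ 𝓝 s.value)
    (N : ℕ) : ∃ s' : ExtensionStage f, ∃ k ≥ N, s.node ++ [k] <+: s'.node ∧
      s'.dense ⊆ s.dense ∧ f '' s'.dense ⊆ U := by
  obtain ⟨k, hk, v, hkv, hv⟩ := (frequently_atTop.1 (s.frequently_denseBelow U hU)) N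
  obtain ⟨s', hvs', hs'⟩ := exists_of_denseBelow f hv
  refine ⟨s', k, hk, hkv.trans hvs', ?_⟩
  rw [hs']
  exact ⟨inter_subset_left, image_subset_iff.2 inter_subset_right⟩

end ExtensionStage

lemma NStar.continuous_of_mapsTo_closedBall [PseudoMetricSpace K] {F : NStar → K}
    {ε : List ℕ → ℝ} (hε : Tendsto ε cofinite (𝓝 0))
    (h : ∀ t i, MapsTo F (cyl (t ++ [i])) (Metric.closedBall (F (lim t)) (ε (t ++ [i])))) :
    Continuous F := by
  refine continuous_of_eventually_mapsTo (fun t U hU => ?_) fun b U hU => ?_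
  · obtain ⟨δ, hδ, hδU⟩ := Metric.nhds_basis_closedBall.mem_iff.1 hU
    have concat_injective : Function.Injective fun i => t ++ [i] := fun i j h => by simpa using h
    filter_upwards [(Nat.cofinite_eq_atTop ▸ hε.comp concat_injective.tendsto_cofinite).eventually
      (eventually_le_nhds hδ)] with i hi
    exact (h t i).mono_right ((Metric.closedBall_subset_closedBall hi).trans hδU)
  · obtain ⟨δ, hδ, hδU⟩ := Metric.nhds_basis_closedBall.mem_iff.1 hU
    have initSeg_injective : Function.Injective fun n => initSeg b (n + 1) := fun m n h => by
      simpa using congrArg List.length h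
    obtain ⟨n, hn⟩ := ((hε.comp initSeg_injective.tendsto_cofinite).eventually
      (eventually_le_nhds (half_pos hδ))).exists
    have near {c : NStar} (hc : c ∈ cyl (initSeg b (n + 1))) :
        dist (F c) (F (lim (initSeg b n))) ≤ δ / 2 := by
      simp only [Function.comp_apply, initSeg_succ] at hc hn
      exact (h _ _ hc).trans hn
    refine ⟨n + 1, fun c hc => hδU ?_⟩
    exact (dist_triangle_right _ _ (F (lim (initSeg b n)))).trans
      ((add_le_add (near hc) (near (prefixFun_initSeg b (n + 1)))).trans (add_halves δ).le)

/-- A value at `inf b` exists by compactness, as a point of `⋂ n, L (b ↾ n)`. -/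
lemma exists_mapsTo_cyl_of_scheme [TopologicalSpace K] [CompactSpace K] {L : List ℕ → Set K}
    {x y : List ℕ → K} (closed : ∀ t, IsClosed (L t)) (hx : ∀ t, x t ∈ L t)
    (hy : ∀ t, y t ∈ L t) (anti : ∀ t i, L (t ++ [i]) ⊆ L t) :
    ∃ F : NStar → K, (∀ t, MapsTo F (NStar.cyl t) (L t)) ∧
      (∀ t, F (.lim t) = x t) ∧ ∀ t, F (.fin t) = y t := by
  have limit (b : ℕ → ℕ) : (⋂ n, L (initSeg b n)).Nonempty :=
    IsCompact.nonempty_iInter_of_sequence_nonempty_isCompact_isClosed _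
      (fun n => by simpa only [initSeg_succ] using anti (initSeg b n) (b n))
      (fun n => ⟨_, hx _⟩) (closed _).isCompact fun n => closed _
  choose z hz using limit
  have mono {s t : List ℕ} : s <+: t → L t ⊆ L s :=
    rel_of_prefix (r := fun A B : Set K => B ⊆ A) (fun _ => Subset.rfl)
      (fun h h' => Subset.trans h' h) anti
  let F : NStar → K
    | .fin t => y t
    | .lim t => x t
    | .inf b => z b
  refine ⟨F, fun t c hc => ?_, fun t => rfl, fun t => rfl⟩
  cases c with
  | fin s => exact mono hc (hy s)
  | lim s => exact mono hc (hx s)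
  | inf b => exact prefixFun_iff.1 hc ▸ mem_iInter.1 (hz b) t.length

theorem exists_continuous_extension [PseudoMetricSpace K] [CompactSpace K] (f : List ℕ → K) :
    ∃ π, ∃ F : NStar → K, MeetEmbedding π ∧ Continuous F ∧ ∀ t, F (.fin t) = f (π t) := by
  let ε (t : List ℕ) : ℝ := 1 / (code t + 1)
  have hε : Tendsto ε cofinite (𝓝 0) := (tendsto_one_div_add_atTop_nhds_zero_nat (𝕜 := ℝ)).comp
    (Nat.cofinite_eq_atTop ▸ code_injective.tendsto_cofinite)
  have : Nonempty (ExtensionStage f) :=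
    ⟨(ExtensionStage.exists_of_denseBelow f (D := univ) (w := []) fun v _ =>
      ⟨v, mem_univ v, List.prefix_rfl⟩).choose⟩
  obtain ⟨ρ, hρ, hQ⟩ := fusion (pos := ExtensionStage.node (f := f))
    (Q := fun t _ s s' => s'.dense ⊆ s.dense ∧ f '' s'.dense ⊆ Metric.closedBall s.value (ε t))
    fun t _ _ s N => s.exists_next (Metric.closedBall_mem_nhds _ Nat.one_div_pos_of_nat) N
  obtain ⟨F, hF, hlim, hfin⟩ := exists_mapsTo_cyl_of_scheme
    (L := fun t => closure (f '' (ρ t).dense)) (fun t => isClosed_closure)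
    (fun t => (ρ t).value_mem_closure)
    (fun t => subset_closure (mem_image_of_mem f (ρ t).node_mem))
    (fun t i => closure_mono (image_mono (hQ t i).1))
  refine ⟨_, F, hρ, NStar.continuous_of_mapsTo_closedBall hε fun t i => ?_, hfin⟩
  rw [hlim]
  exact (hF _).mono_right (closure_minimal (hQ t i).2 Metric.isClosed_closedBall)

end Extension

/-! ### Category on Baire space -/

theorem exists_isOpen_forall_not_isMeagre_inter {Y : Type*} [TopologicalSpace Y]
    [SecondCountableTopology Y] {B : Set Y} (hB : ¬ IsMeagre B) :
    ∃ U, IsOpen U ∧ (B ∩ U).Nonempty ∧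
      ∀ W, IsOpen W → W.Nonempty → W ⊆ U → ¬ IsMeagre (B ∩ W) := by
  let 𝓜 : Set (Set Y) := {W ∈ countableBasis Y | IsMeagre (B ∩ W)}
  have isMeagre_sUnion : IsMeagre (B ∩ ⋃₀ 𝓜) := by
    rw [sUnion_eq_biUnion, inter_iUnion₂]
    exact isMeagre_biUnion ((countable_countableBasis Y).mono (sep_subset _ _)) fun W hW => hW.2
  have isOpen_sUnion : IsOpen (⋃₀ 𝓜) :=
    isOpen_sUnion fun W hW => isOpen_of_mem_countableBasis hW.1
  refine ⟨interior (⋃₀ 𝓜)ᶜ, isOpen_interior, not_disjoint_iff_nonempty_inter.1 fun hdisj => hB ?_,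
    fun W hW hne hWU hmeagre => ?_⟩
  · have hfrontier : IsMeagre ((⋃₀ 𝓜)ᶜ \ interior (⋃₀ 𝓜)ᶜ) := by
      rw [← isOpen_sUnion.isClosed_compl.frontier_eq]
      exact (isClosed_frontier.isNowhereDense_iff.2
        (interior_frontier isOpen_sUnion.isClosed_compl)).isMeagre
    refine (isMeagre_sUnion.union hfrontier).mono fun x hx => ?_
    exact (em (x ∈ ⋃₀ 𝓜)).imp (⟨hx, ·⟩) (⟨·, disjoint_left.1 hdisj hx⟩)
  · obtain ⟨x, hx⟩ := hne
    obtain ⟨V, hV, hxV, hVW⟩ :=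
      (isBasis_countableBasis Y).exists_subset_of_mem_open hx hW
    exact interior_subset (hWU hx) ⟨V, ⟨hV, hmeagre.mono (inter_subset_inter_right B hVW)⟩, hxV⟩

/-- The basic open set of the Baire space consisting of the infinite sequences through `t`. -/
def branches (t : List ℕ) : Set (ℕ → ℕ) := {b | PrefixFun t b}

lemma branches_eq_cylinder (t : List ℕ) :
    branches t = PiNat.cylinder (fun i => t.getD i 0) t.length := by
  ext b
  refine forall_congr' fun i => forall_congr' fun hi => ?_
  simp [hi, eq_comm]

lemma isOpen_branches (t : List ℕ) : IsOpen (branches t) := by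
  rw [branches_eq_cylinder]
  exact PiNat.isOpen_cylinder _ _ _

lemma nonempty_branches (t : List ℕ) : (branches t).Nonempty := by
  rw [branches_eq_cylinder]
  exact ⟨_, PiNat.self_mem_cylinder _ _⟩

lemma iUnion_branches_concat (t : List ℕ) : ⋃ i, branches (t ++ [i]) = branches t := by
  refine subset_antisymm (iUnion_subset fun i b => PrefixFun.mono (List.prefix_append t [i]))
    fun b hb => mem_iUnion.2 ⟨b t.length, ?_⟩
  rw [prefixFun_iff.1 hb, length_initSeg, ← initSeg_succ]
  exact prefixFun_initSeg b _

lemma exists_branches_subset {U : Set (ℕ → ℕ)} (hU : IsOpen U) {s : List ℕ}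
    (h : (U ∩ branches s).Nonempty) : ∃ t, s <+: t ∧ branches t ⊆ U := by
  obtain ⟨b, hbU, hbs⟩ := h
  obtain ⟨_, ⟨c, n, rfl⟩, hbc, hcU⟩ :=
    (PiNat.isTopologicalBasis_cylinders fun _ => ℕ).exists_subset_of_mem_open hbU hU
  refine ⟨initSeg b (max s.length n), hbs.prefix_initSeg (le_max_left _ _), fun d hd => hcU ?_⟩
  rw [← PiNat.mem_cylinder_iff_eq.1 hbc]
  exact PiNat.cylinder_anti b (le_max_right _ _) (prefixFun_initSeg_iff.1 hd)

lemma exists_meetEmbedding_limSeq_notMem {P : Set (ℕ → ℕ)} (hP : IsMeagre P) :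
    ∃ π, MeetEmbedding π ∧ ∀ b, limSeq π b ∉ P := by
  obtain ⟨G, hGP, hG, hdense⟩ := mem_residual.1 hP
  obtain ⟨U, hU, rfl⟩ := hG.eq_iInter_nat
  obtain ⟨π, hπ, hQ⟩ := fusion (pos := id) (Q := fun t _ _ s' => branches s' ⊆ U (t.length - 1))
    fun t _ _ s N => by
      have hne := (hdense.mono (iInter_subset U (t.length - 1))).inter_open_nonempty _
        (isOpen_branches (s ++ [N])) (nonempty_branches _)
      obtain ⟨s', hs, hs'⟩ := exists_branches_subset (hU _) (inter_comm _ _ ▸ hne)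
      exact ⟨s', N, le_rfl, hs, hs'⟩
  refine ⟨π, hπ, fun b hb => hGP (mem_iInter.2 fun n => ?_) hb⟩
  have hn : branches (π (initSeg b (n + 1))) ⊆ U n := by
    simpa [initSeg_succ] using hQ (initSeg b n) (b n)
  exact hn (hπ.strictPrefixMono.prefixFun_limSeq b _)

/-- `B` is nonmeagre in every basic open set below `u`. -/
def NonmeagreBelow (B : Set (ℕ → ℕ)) (u : List ℕ) : Prop :=
  ∀ v, u <+: v → ¬ IsMeagre (B ∩ branches v)

lemma exists_nonmeagreBelow {B : Set (ℕ → ℕ)} {u : List ℕ} (h : ¬ IsMeagre (B ∩ branches u)) :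
    ∃ v, u <+: v ∧ NonmeagreBelow B v := by
  obtain ⟨U, hU, ⟨b, ⟨-, hbu⟩, hbU⟩, hnonmeagre⟩ := exists_isOpen_forall_not_isMeagre_inter h
  obtain ⟨v, huv, hvU⟩ := exists_branches_subset hU ⟨b, hbU, hbu⟩
  refine ⟨v, huv, fun w hvw hw => hnonmeagre _ (isOpen_branches w) (nonempty_branches w)
    (.trans (fun b => PrefixFun.mono hvw) hvU) (hw.mono ?_)⟩
  exact inter_subset_inter_left _ inter_subset_left

lemma NonmeagreBelow.exists_concat {f : (ℕ → ℕ) → ℕ → ℕ} {u σ : List ℕ}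
    (h : NonmeagreBelow (f '' branches σ) u) (N : ℕ) :
    ∃ v i, u ++ [N] <+: v ∧ NonmeagreBelow (f '' branches (σ ++ [i])) v := by
  have hN := h (u ++ [N]) (List.prefix_append _ _)
  rw [← iUnion_branches_concat σ, image_iUnion, iUnion_inter] at hN
  obtain ⟨i, hi⟩ := not_forall.1 (mt isMeagre_iUnion hN)
  obtain ⟨v, hv, hv'⟩ := exists_nonmeagreBelow hi
  exact ⟨v, i, hv, hv'⟩

/-- The fusion runs simultaneously in the domain and the range of `f`, so that every branch of the
embedding is the image of the corresponding branch in the domain. -/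
lemma exists_meetEmbedding_limSeq_mem_range {f : (ℕ → ℕ) → ℕ → ℕ} (hf : Continuous f)
    (h : ¬ IsMeagre (range f)) : ∃ π, MeetEmbedding π ∧ ∀ b, limSeq π b ∈ range f := by
  let S := {p : List ℕ × List ℕ // NonmeagreBelow (f '' branches p.2) p.1}
  have : Nonempty S := by
    obtain ⟨u, -, hu⟩ := exists_nonmeagreBelow (B := f '' branches []) (u := []) <| by
      simpa [branches, PrefixFun] using h
    exact ⟨⟨(u, []), hu⟩⟩
  obtain ⟨ρ, hπ, hQ⟩ := fusion (S := S) (pos := fun s => s.1.1)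
    (Q := fun _ _ s s' => ∃ i, s.1.2 ++ [i] <+: s'.1.2) fun _ _ _ s N => by
      obtain ⟨v, i, hv, hv'⟩ := s.2.exists_concat N
      exact ⟨⟨(v, _), hv'⟩, N, le_rfl, hv, i, List.prefix_rfl⟩
  have hσ : StrictPrefixMono fun t => (ρ t).1.2 := hQ
  refine ⟨_, hπ, fun b => ⟨limSeq (fun t => (ρ t).1.2) b, ?_⟩⟩
  have witness (n : ℕ) : ∃ c ∈ branches (ρ (initSeg b n)).1.2,
      f c ∈ branches (ρ (initSeg b n)).1.1 := by
    obtain ⟨_, ⟨c, hc, rfl⟩, hfc⟩ :=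
      nonempty_of_not_isMeagre ((ρ (initSeg b n)).2 _ List.prefix_rfl)
    exact ⟨c, hc, hfc⟩
  choose c hc hfc using witness
  exact tendsto_nhds_unique ((hf.tendsto _).comp (hσ.tendsto_limSeq hc))
    (hπ.strictPrefixMono.tendsto_limSeq hfc)

theorem exists_meetEmbedding_allOrNone_limSeq_mem {P : Set (ℕ → ℕ)}
    (hP : MeasureTheory.AnalyticSet P) :
    ∃ π, MeetEmbedding π ∧ AllOrNone fun b => limSeq π b ∈ P := by
  by_cases hmeagre : IsMeagre P
  · obtain ⟨π, hπ, h⟩ := exists_meetEmbedding_limSeq_notMem hmeagre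
    exact ⟨π, hπ, .inr h⟩
  rw [MeasureTheory.AnalyticSet] at hP
  rcases hP with rfl | ⟨f, hf, rfl⟩
  · exact absurd .empty hmeagre
  · obtain ⟨π, hπ, h⟩ := exists_meetEmbedding_limSeq_mem_range hf hmeagre
    exact ⟨π, hπ, .inl h⟩

/-! ### Injectivity -/

namespace NStar

variable {K : Type*} {F : NStar → K} {π : List ℕ → List ℕ}

/-- The retraction of `ℕ^{≤ℕ}_*` onto `ℕ^ℕ_*` sending `t` to `t⌢⟨∞⟩`. -/
def finToLim : NStar → NStar
  | fin t => lim t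
  | c => c

lemma exists_prefixFun_not_prefix (b : ℕ → ℕ) (s : List ℕ) : ∃ t, PrefixFun t b ∧ ¬ t <+: s :=
  ⟨initSeg b (s.length + 1), prefixFun_initSeg b _, fun h => by simpa using h.length_le⟩

lemma finToLim_eq_of_forall_mem_cyl_iff {c d : NStar} (h : ∀ t, c ∈ cyl t ↔ d ∈ cyl t) :
    finToLim c = finToLim d := by
  cases c with
  | inf b =>
    cases d with
    | inf b' =>
      refine congrArg inf (funext fun n => ?_)
      exact (prefixFun_initSeg_iff.1 ((h _).1 (prefixFun_initSeg b (n + 1))) n n.lt_succ_self).symm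
    | _ s =>
      obtain ⟨t, ht, hts⟩ := exists_prefixFun_not_prefix b s
      exact absurd ((h t).1 ht) hts
  | _ s =>
    cases d with
    | inf b =>
      obtain ⟨t, ht, hts⟩ := exists_prefixFun_not_prefix b s
      exact absurd ((h t).2 ht) hts
    | _ s' =>
      have hs : s <+: s' := (h s).1 List.prefix_rfl
      exact congrArg lim (antisymm hs ((h s').2 List.prefix_rfl))

lemma mem_cyl_of_apply_hat_eq (hπ : MeetEmbedding π)
    (hlim : ∀ t i, F (lim (π t)) ∉ F '' cyl (π (t ++ [i])))
    (hfin : ∀ t i, F (fin (π t)) ∉ F '' cyl (π (t ++ [i])))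
    (disj : ∀ t, Pairwise fun i j =>
      Disjoint (F '' cyl (π (t ++ [i]))) (F '' cyl (π (t ++ [j]))))
    {t : List ℕ} {c d : NStar} (e : F (hat π c) = F (hat π d)) (hc : c ∈ cyl t) :
    d ∈ cyl t := by
  induction t using List.reverseRecOn with
  | nil => exact cyl_nil ▸ mem_univ d
  | append_singleton t i ih =>
    have hc' : F (hat π c) ∈ F '' cyl (π (t ++ [i])) :=
      mem_image_of_mem F (mapsTo_hat_cyl hπ _ hc)
    rcases eq_or_exists_mem_cyl_concat (ih (cyl_anti (List.prefix_append _ _) hc)) with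
      rfl | rfl | ⟨j, hj⟩
    · exact absurd (e ▸ hc') (hfin t i)
    · exact absurd (e ▸ hc') (hlim t i)
    · have hd' := mem_image_of_mem F (mapsTo_hat_cyl hπ _ hj)
      obtain rfl | hij := eq_or_ne i j
      exacts [hj, (disjoint_left.1 (disj t hij) hc' (e ▸ hd')).elim]

variable [TopologicalSpace K] [T2Space K]

lemma isClosed_image_cyl (hF : Continuous F) (t : List ℕ) : IsClosed (F '' cyl t) :=
  ((isClopen_cyl t).isClosed.isCompact.image hF).isClosed

lemma exists_separated_node (hF : Continuous F) (hinj : Function.Injective fun t => F (lim t))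
    {A : Set (List ℕ)} (hA : A.Finite) (w : List ℕ) (N : ℕ) :
    ∃ v, ∃ k ≥ N, w ++ [k] <+: v ∧ F (lim w) ∉ F '' cyl v ∧ F (fin w) ∉ F '' cyl v ∧
      ∀ a ∈ A, F (lim w) ∉ F '' cyl a → Disjoint (F '' cyl a) (F '' cyl v) := by
  let Z : Set K := ⋃ a ∈ {a ∈ A | F (lim w) ∉ F '' cyl a}, F '' cyl a
  have hZ : IsClosed Z :=
    (hA.subset (sep_subset _ _)).isClosed_biUnion fun a _ => isClosed_image_cyl hF a
  have hwZ : F (lim w) ∈ Zᶜ := fun h => by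
    obtain ⟨a, ha, haw⟩ := mem_iUnion₂.1 h
    exact ha.2 haw
  have avoid_Z := (mem_nhds_lim.1 (hF.continuousAt (hZ.isOpen_compl.mem_nhds hwZ))).2
  have concat_injective : Function.Injective fun k : ℕ => F (lim (w ++ [k])) :=
    fun i j h => by simpa using hinj h
  have ne_fin : ∀ᶠ k in atTop, F (lim (w ++ [k])) ≠ F (fin w) :=
    Nat.cofinite_eq_atTop ▸
      concat_injective.tendsto_cofinite.eventually (eventually_cofinite_ne _)
  obtain ⟨k, hk, hkZ, hkfin⟩ := (eventually_ge_atTop N |>.and (avoid_Z.and ne_fin)).exists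
  have hpair : F (lim (w ++ [k])) ∈ ({F (lim w), F (fin w)} : Set K)ᶜ := by
    have hklim : F (lim (w ++ [k])) ≠ F (lim w) := hinj.ne (by simp)
    simp [hklim, hkfin]
  obtain ⟨m, hm⟩ := (mem_nhds_lim.1 (hF.continuousAt
    ((toFinite {F (lim w), F (fin w)}).isClosed.isOpen_compl.mem_nhds hpair))).2.exists
  refine ⟨w ++ [k] ++ [m], k, hk, List.prefix_append _ _, ?_, ?_, fun a ha haw => ?_⟩
  · rintro ⟨c, hc, e⟩
    exact hm hc (.inl e)
  · rintro ⟨c, hc, e⟩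
    exact hm hc (.inr e)
  · refine disjoint_left.2 fun x hxa ⟨c, hc, e⟩ => hkZ (cyl_anti (List.prefix_append _ _) hc) ?_
    exact mem_biUnion ⟨ha, haw⟩ (e ▸ hxa)

theorem exists_meetEmbedding_factorsThrough (hF : Continuous F)
    (hinj : Function.Injective fun t => F (lim t)) :
    ∃ π, MeetEmbedding π ∧ Function.FactorsThrough finToLim (F ∘ hat π) := by
  obtain ⟨π, hπ, hQ⟩ := fusion (pos := id)
    (Q := fun _ A w v => F (lim w) ∉ F '' cyl v ∧ F (fin w) ∉ F '' cyl v ∧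
      ∀ a ∈ A, F (lim w) ∉ F '' cyl a → Disjoint (F '' cyl a) (F '' cyl v))
    fun _ _ hA w N => exists_separated_node hF hinj hA w N
  have disj (t : List ℕ) : Pairwise fun i j =>
      Disjoint (F '' cyl (π (t ++ [i]))) (F '' cyl (π (t ++ [j]))) := fun i j hij => by
    have hcode := code_injective.ne (a₁ := t ++ [i]) (a₂ := t ++ [j]) (by simpa)
    rcases lt_or_gt_of_ne hcode with h | h
    · exact (hQ t j).2.2 _ (mem_image_of_mem π h) (hQ t i).1
    · exact ((hQ t i).2.2 _ (mem_image_of_mem π h) (hQ t j).1).symm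
  have mem {t : List ℕ} {c d : NStar} : F (hat π c) = F (hat π d) → c ∈ cyl t → d ∈ cyl t :=
    mem_cyl_of_apply_hat_eq hπ (fun t i => (hQ t i).1) (fun t i => (hQ t i).2.1) disj
  exact ⟨π, hπ, fun c d e => finToLim_eq_of_forall_mem_cyl_iff fun t => ⟨mem e, mem e.symm⟩⟩

end NStar

/-! ### Stable functions -/

lemma limSeq_comp {π ρ : List ℕ → List ℕ} (hπ : MeetEmbedding π) (hρ : MeetEmbedding ρ)
    (b : ℕ → ℕ) : limSeq (π ∘ ρ) b = limSeq π (limSeq ρ b) := by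
  refine tendsto_nhds_unique ((hπ.comp hρ).strictPrefixMono.tendsto_limSeq fun n => ?_)
    tendsto_const_nhds
  have hρb := prefixFun_iff.1 (hρ.strictPrefixMono.prefixFun_limSeq b n)
  rw [Function.comp_apply, hρb]
  exact hπ.strictPrefixMono.prefixFun_limSeq _ _

namespace NStar

variable {K : Type*} {F : NStar → K}

lemma hat_comp {π ρ : List ℕ → List ℕ} (hπ : MeetEmbedding π) (hρ : MeetEmbedding ρ) :
    hat (π ∘ ρ) = hat π ∘ hat ρ := by
  funext c
  cases c with
  | inf b => exact congrArg inf (limSeq_comp hπ hρ b)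
  | _ t => rfl

theorem exists_meetEmbedding_lim_const_or_factorsThrough [TopologicalSpace K] [T2Space K]
    (hF : Continuous F) : ∃ π, MeetEmbedding π ∧
      ((∃ y, ∀ t, F (lim (π t)) = y) ∨ Function.FactorsThrough finToLim (F ∘ hat π)) := by
  obtain ⟨π, hπ, hconst | hinj⟩ := exists_meetEmbedding_const_or_injective fun t => F (lim t)
  · exact ⟨π, hπ, .inl hconst⟩
  · obtain ⟨ρ, hρ, hfac⟩ :=
      exists_meetEmbedding_factorsThrough (hF.comp (continuous_hat hπ)) hinj
    exact ⟨π ∘ ρ, hπ.comp hρ, .inr (hat_comp hπ hρ ▸ hfac)⟩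

lemma injective_of_factorsThrough_finToLim (hfac : Function.FactorsThrough finToLim F)
    (hne : ∀ t, F (lim t) ≠ F (fin t)) : Function.Injective F := by
  rintro (s | b | s) (t | b' | t) h <;> obtain ⟨⟩ := hfac h
  exacts [rfl, absurd h.symm (hne s), rfl, absurd h (hne s), rfl]

/-- A continuous function on `ℕ^{≤ℕ}_*` whose qualitative behaviour, including its relation to a
given set `R`, is the same at all nodes and along all branches, and hence does not change when
passing to a further `∧`-embedding. -/
structure IsStable [TopologicalSpace K] (R : Set K) (F : NStar → K) : Prop where
  continuous : Continuous F
  lim_mem : AllOrNone fun t => F (lim t) ∈ R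
  inf_mem : AllOrNone fun b => F (inf b) ∈ R
  lim_eq_fin : AllOrNone fun t => F (lim t) = F (fin t)
  fin_const_or_injective : (∃ x, ∀ t, F (fin t) = x) ∨ Function.Injective fun t => F (fin t)
  lim_const_or_factorsThrough : (∃ y, ∀ t, F (lim t) = y) ∨ Function.FactorsThrough finToLim F

open MeasureTheory in
theorem exists_isStable [TopologicalSpace K] [CompactSpace K] [MetrizableSpace K]
    (f : List ℕ → K) {R : Set K} (hR : AnalyticSet R) :
    ∃ π, ∃ F : NStar → K, MeetEmbedding π ∧ IsStable R F ∧ ∀ t, F (fin t) = f (π t) := by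
  let := metrizableSpaceMetric K
  obtain ⟨π₁, F₁, hπ₁, hF₁, hf⟩ := exists_continuous_extension f
  obtain ⟨π₂, hπ₂, lim_mem⟩ := exists_meetEmbedding_allOrNone fun t => F₁ (lim t) ∈ R
  obtain ⟨π₃, hπ₃, lim_eq_fin⟩ := exists_meetEmbedding_allOrNone fun t =>
    F₁ (lim (π₂ t)) = F₁ (fin (π₂ t))
  obtain ⟨π₄, hπ₄, fin_const⟩ :=
    exists_meetEmbedding_const_or_injective fun t => F₁ (fin (π₂ (π₃ t)))
  let F₄ : NStar → K := F₁ ∘ hat π₂ ∘ hat π₃ ∘ hat π₄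
  have hF₄ : Continuous F₄ := hF₁.comp
    ((continuous_hat hπ₂).comp ((continuous_hat hπ₃).comp (continuous_hat hπ₄)))
  obtain ⟨π₅, hπ₅, inf_mem⟩ :=
    exists_meetEmbedding_allOrNone_limSeq_mem (hR.preimage (hF₄.comp continuous_inf))
  obtain ⟨π₆, hπ₆, lim_const⟩ := exists_meetEmbedding_lim_const_or_factorsThrough
    (hF₄.comp (continuous_hat hπ₅))
  have hπ₅₆ := hπ₅.comp hπ₆
  refine ⟨π₁ ∘ π₂ ∘ π₃ ∘ π₄ ∘ π₅ ∘ π₆, F₄ ∘ hat π₅ ∘ hat π₆,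
    hπ₁.comp (hπ₂.comp (hπ₃.comp (hπ₄.comp hπ₅₆))), ⟨?_, ?_, ?_, ?_, ?_, lim_const⟩, fun t => hf _⟩
  · exact hF₄.comp ((continuous_hat hπ₅).comp (continuous_hat hπ₆))
  · exact lim_mem.comp (π₃ ∘ π₄ ∘ π₅ ∘ π₆)
  · exact inf_mem.comp (limSeq π₆)
  · exact lim_eq_fin.comp (π₄ ∘ π₅ ∘ π₆)
  · exact fin_const.imp (fun ⟨x, hx⟩ => ⟨x, fun t => hx _⟩) fun h => h.comp hπ₅₆.1

end NStar

/-! ### Closed extensions -/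

section ClosedExtension

variable {A X Y Z K : Type*} [TopologicalSpace X] [TopologicalSpace Y] [TopologicalSpace Z]
  [TopologicalSpace K]

/-- The function `f`, transported along `e`, extends to an injective continuous closed map. -/
def HasClosedExtension (e : A → Z) (f : A → X) : Prop :=
  ∃ ψ : Z → X, Function.Injective ψ ∧ Continuous ψ ∧ IsClosedMap ψ ∧ ∀ a, ψ (e a) = f a

lemma HasClosedExtension.of_id {f : Z → X} (h : HasClosedExtension id f) :
    Function.Injective f ∧ Continuous f ∧ IsClosedMap f := by
  obtain ⟨ψ, hinj, hcont, hclosed, e⟩ := h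
  obtain rfl : ψ = f := funext e
  exact ⟨hinj, hcont, hclosed⟩

lemma HasClosedExtension.of_isClosedEmbedding {j : X → K} (hj : IsEmbedding j) {G : Y → K}
    (hG : IsClosedEmbedding G) {e : Z → Y} (he : IsEmbedding e)
    (hr : ∀ y, G y ∈ range j ↔ y ∈ range e) {i : A → Z} {f : A → X}
    (h : ∀ a, G (e (i a)) = j (f a)) : HasClosedExtension i f := by
  choose ψ hψ using fun z => (hr (e z)).2 (mem_range_self z)
  have hcomp : j ∘ ψ = G ∘ e := funext hψ
  have hcont : Continuous ψ := hj.continuous_iff.2 (hcomp ▸ hG.continuous.comp he.continuous)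
  have hemb : IsEmbedding ψ :=
    .of_comp hcont hj.continuous (hcomp ▸ hG.isEmbedding.comp he)
  have hrange : range ψ = j ⁻¹' range G := by
    ext x
    refine ⟨fun ⟨z, hz⟩ => ⟨e z, hz ▸ (hψ z).symm⟩, fun ⟨y, hy⟩ => ?_⟩
    obtain ⟨z, rfl⟩ := (hr y).1 ⟨x, hy.symm⟩
    exact ⟨z, hj.injective ((hψ z).trans hy)⟩
  have hclosed : IsClosed (range ψ) := hrange ▸ hG.isClosed_range.preimage hj.continuous
  exact ⟨ψ, hemb.injective, hcont, (IsClosedEmbedding.mk hemb hclosed).isClosedMap,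
    fun a => hj.injective ((hψ _).trans (h a))⟩

end ClosedExtension

namespace NStar

section OnePoint

variable {K : Type*} {F : NStar → K}

lemma injective_onePoint_elim {y : K} (hinj : Function.Injective fun t => F (fin t))
    (hne : ∀ t, F (fin t) ≠ y) :
    Function.Injective fun z : OnePoint NFin => z.elim y fun c => F c.1 := by
  rintro (_ | ⟨_, s, rfl⟩) (_ | ⟨_, t, rfl⟩) h
  · rfl
  · exact absurd h.symm (hne t)
  · exact absurd h (hne s)
  · exact hinj h ▸ rfl

variable [TopologicalSpace K] [T2Space K]

lemma tendsto_lim_initSeg (b : ℕ → ℕ) :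
    Tendsto (fun n => lim (initSeg b n)) atTop (𝓝 (inf b)) := fun U hU => by
  obtain ⟨n, hn⟩ := mem_nhds_inf.1 hU
  exact mem_map.2 ((eventually_ge_atTop n).mono fun m hm => hn (initSeg_mono b hm))

lemma continuous_onePoint_elim (hF : Continuous F) {y : K} (hy : ∀ t, F (lim t) = y) :
    Continuous fun z : OnePoint NFin => z.elim y fun c => F c.1 := by
  have hinf (b : ℕ → ℕ) : F (inf b) = y :=
    tendsto_nhds_unique ((hF.tendsto _).comp (tendsto_lim_initSeg b))
      (tendsto_const_nhds.congr fun n => (hy _).symm)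
  refine (OnePoint.continuous_iff_from_discrete _).2 (tendsto_def.2 fun V hV => ?_)
  obtain ⟨O, hOV, hO, hyO⟩ := mem_nhds_iff.1 hV
  have subset_fin : F ⁻¹' Oᶜ ⊆ range (Subtype.val : NFin → NStar) := by
    rintro (t | b | t) hc
    · exact ⟨finPt t, rfl⟩
    · exact absurd (hinf b ▸ hyO) hc
    · exact absurd (hy t ▸ hyO) hc
  have hcompact : IsCompact ((Subtype.val : NFin → NStar) ⁻¹' (F ⁻¹' Oᶜ)) :=
    (IsInducing.subtypeVal.isCompact_preimage_iff subset_fin).2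
      (hO.isClosed_compl.preimage hF).isCompact
  exact (isCompact_iff_finite.1 hcompact).subset fun c hc hcO => hc (hOV hcO)

end OnePoint

variable {X K : Type*} [TopologicalSpace X] [TopologicalSpace K] [T2Space K] {F : NStar → K}
  {j : X → K} {f : List ℕ → X}

theorem hasClosedExtension_of_lim_const (hj : IsEmbedding j) (hF : Continuous F)
    (hinj : Function.Injective fun t => F (fin t)) {y : K} (hy : ∀ t, F (lim t) = y)
    (hne : ∀ t, F (fin t) ≠ y) (hf : ∀ t, F (fin t) = j (f t)) :
    HasClosedExtension finPt f ∨
      HasClosedExtension (fun t => (finPt t : OnePoint NFin)) f := by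
  have hG := (continuous_onePoint_elim hF hy).isClosedEmbedding (injective_onePoint_elim hinj hne)
  by_cases hyj : y ∈ range j
  · refine .inr (.of_isClosedEmbedding hj hG .id ?_ hf)
    rintro (_ | ⟨_, t, rfl⟩)
    · exact iff_of_true hyj ⟨_, rfl⟩
    · exact iff_of_true ⟨_, (hf t).symm⟩ ⟨_, rfl⟩
  · refine .inl (.of_isClosedEmbedding hj hG OnePoint.isOpenEmbedding_coe.isEmbedding ?_ hf)
    rintro (_ | ⟨_, t, rfl⟩)
    · exact iff_of_false hyj OnePoint.infty_notMem_range_coe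
    · exact iff_of_true ⟨_, (hf t).symm⟩ ⟨_, rfl⟩

instance : CompactSpace NNStar := by
  have hopen : IsOpen {c : NStar | c.IsFin} := by
    have h : {c : NStar | c.IsFin} = ⋃ t, {fin t} := by
      ext c
      simp [IsFin, eq_comm]
    exact h ▸ isOpen_iUnion fun t => (isClopen_singleton_fin t).isOpen
  exact isCompact_iff_compactSpace.1 hopen.isClosed_compl.isCompact

lemma isEmbedding_toNN : IsEmbedding NLim.toNN :=
  .of_comp (continuous_subtype_val.subtype_mk _) continuous_subtype_val .subtypeVal

lemma finToLim_injOn : InjOn finToLim {c | ¬ c.IsFin} := by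
  rintro (s | b | s) hc (t | b' | t) hd h
  all_goals first | exact h | exact absurd ⟨_, rfl⟩ hc | exact absurd ⟨_, rfl⟩ hd

theorem IsStable.hasClosedExtension_of_lim_eq_fin (hF : IsStable (range j) F) (hj : IsEmbedding j)
    (hfac : Function.FactorsThrough finToLim F) (heq : ∀ t, F (lim t) = F (fin t))
    {g : NLim → X} (hg : ∀ t, F (fin t) = j (g (limPt t))) :
    HasClosedExtension id g ∨ HasClosedExtension NLim.toNN g := by
  have hG : IsClosedEmbedding fun c : NNStar => F c.1 :=
    (hF.continuous.comp continuous_subtype_val).isClosedEmbedding fun c d h =>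
      Subtype.ext (finToLim_injOn c.2 d.2 (hfac h))
  have hlim (t : List ℕ) : F (lim t) = j (g (limPt t)) := (heq t).trans (hg t)
  have hlim' (c : NLim) : F c.1 = j (g c) := by
    obtain ⟨_, t, rfl⟩ := c
    exact hlim t
  rcases hF.inf_mem with hinf | hinf
  · refine .inr (.of_isClosedEmbedding hj hG .id ?_ hlim')
    rintro ⟨t | b | t, hc⟩
    · exact absurd ⟨t, rfl⟩ hc
    · exact iff_of_true (hinf b) ⟨_, rfl⟩
    · exact iff_of_true ⟨_, (hlim t).symm⟩ ⟨_, rfl⟩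
  · refine .inl (.of_isClosedEmbedding hj hG isEmbedding_toNN ?_ hlim')
    rintro ⟨t | b | t, hc⟩
    · exact absurd ⟨t, rfl⟩ hc
    · refine iff_of_false (hinf b) ?_
      rintro ⟨⟨_, t, rfl⟩, h⟩
      simp [NLim.toNN] at h
    · exact iff_of_true ⟨_, (hlim t).symm⟩ ⟨limPt t, rfl⟩

theorem IsStable.hasClosedExtension_of_injective (hF : IsStable (range j) F) (hj : IsEmbedding j)
    (hinj : Function.Injective F) (hf : ∀ t, F (fin t) = j (f t)) :
    HasClosedExtension finPt f ∨ HasClosedExtension (fun t => (finPt t).toFinLim) f ∨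
      HasClosedExtension (fun t => (finPt t).toFinInf) f ∨ HasClosedExtension fin f := by
  have hG := hF.continuous.isClosedEmbedding hinj
  have hfin (t : List ℕ) : F (fin t) ∈ range j := ⟨_, (hf t).symm⟩
  have subtype {p : NStar → Prop} (hp : ∀ c, F c ∈ range j ↔ p c) {i : List ℕ → {c // p c}}
      (hi : ∀ t, (i t).1 = fin t) : HasClosedExtension i f :=
    .of_isClosedEmbedding hj hG .subtypeVal (by simpa using hp) fun t => hi t ▸ hf t
  rcases hF.lim_mem with hlim | hlim <;> rcases hF.inf_mem with hinf | hinf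
  · refine .inr (.inr (.inr (.of_isClosedEmbedding hj hG .id ?_ hf)))
    rintro (t | b | t) <;> simp [hfin, hlim, hinf]
  · refine .inr (.inl (subtype ?_ fun t => rfl))
    rintro (t | b | t) <;> simp [IsInf, hfin, hlim, hinf]
  · refine .inr (.inr (.inl (subtype ?_ fun t => rfl)))
    rintro (t | b | t) <;> simp only [IsLim, hfin, hlim, hinf] <;> simp
  · refine .inl (subtype ?_ fun t => rfl)
    rintro (t | b | t) <;> simp only [IsFin, hfin, hlim, hinf] <;> simp

end NStar

open MeasureTheory unitInterval in
theorem IsAnalytic.exists_isEmbedding {X : Type*} [TopologicalSpace X] [MetrizableSpace X]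
    (hX : IsAnalytic X) : ∃ j : X → ℕ → I, IsEmbedding j ∧ AnalyticSet (range j) := by
  obtain ⟨C, hC, f, hf, hsurj⟩ := hX
  let := metrizableSpaceMetric X
  have : SeparableSpace X := hsurj.denseRange.separableSpace hf
  obtain ⟨j, hj⟩ := Metric.PiNatEmbed.exists_embedding_to_hilbert_cube (X := X)
  have := hC.polishSpace
  exact ⟨j, hj, hsurj.range_comp j ▸ analyticSet_range_of_polishSpace (hj.continuous.comp hf)⟩

/-- stabilization of functions on `ℕ^ℕ_* ∖ ℕ^ℕ`. -/
theorem stmt_16 {X : Type*} [MetricSpace X] (hX : IsAnalytic X) (φ : NLim → X) :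
    ∃ π : List ℕ → List ℕ, MeetEmbedding π ∧
      ((∃ x, ∀ c, (φ ∘ hatLim π) c = x) ∨
        (Function.Injective (φ ∘ hatLim π) ∧ Continuous (φ ∘ hatLim π) ∧
          IsClosedMap (φ ∘ hatLim π)) ∨
        (∃ ψ : NNStar → X, Function.Injective ψ ∧ Continuous ψ ∧ IsClosedMap ψ ∧
          ∀ c : NLim, ψ c.toNN = (φ ∘ hatLim π) c) ∨
        (∃ ψ : NFin → X, Function.Injective ψ ∧ Continuous ψ ∧ IsClosedMap ψ ∧
          ∀ t : List ℕ, ψ (finPt t) = (φ ∘ hatLim π) (limPt t)) ∨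
        (∃ ψ : OnePoint NFin → X, Function.Injective ψ ∧ Continuous ψ ∧ IsClosedMap ψ ∧
          ∀ t : List ℕ, ψ (OnePoint.some (finPt t)) = (φ ∘ hatLim π) (limPt t)) ∨
        (∃ ψ : NFinLim → X, Function.Injective ψ ∧ Continuous ψ ∧ IsClosedMap ψ ∧
          ∀ t : List ℕ, ψ (NFin.toFinLim (finPt t)) = (φ ∘ hatLim π) (limPt t)) ∨
        (∃ ψ : NFinInf → X, Function.Injective ψ ∧ Continuous ψ ∧ IsClosedMap ψ ∧
          ∀ t : List ℕ, ψ (NFin.toFinInf (finPt t)) = (φ ∘ hatLim π) (limPt t)) ∨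
        (∃ ψ : NStar → X, Function.Injective ψ ∧ Continuous ψ ∧ IsClosedMap ψ ∧
          ∀ t : List ℕ, ψ (NStar.fin t) = (φ ∘ hatLim π) (limPt t))) := by
  obtain ⟨j, hj, hR⟩ := hX.exists_isEmbedding
  obtain ⟨π, F, hπ, hF, hφ⟩ := NStar.exists_isStable (fun t => j (φ (limPt t))) hR
  refine ⟨π, hπ, ?_⟩
  rcases hF.fin_const_or_injective with ⟨x, hx⟩ | hinj
  · refine .inl ⟨φ (limPt (π [])), ?_⟩
    rintro ⟨_, t, rfl⟩
    exact hj.injective ((hφ t).symm.trans ((hx t).trans ((hx []).symm.trans (hφ []))))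
  rcases hF.lim_eq_fin with heq | hne <;> rcases hF.lim_const_or_factorsThrough with hconst | hfac
  · obtain ⟨y, hy⟩ := hconst
    have hfin (t) : F (.fin t) = y := (heq t).symm.trans (hy t)
    exact absurd (hinj ((hfin []).trans (hfin [0]).symm)) (by simp)
  · exact .inr ((hF.hasClosedExtension_of_lim_eq_fin hj hfac heq hφ).imp (·.of_id) .inl)
  · obtain ⟨y, hy⟩ := hconst
    exact .inr (.inr (.inr ((NStar.hasClosedExtension_of_lim_const hj hF.continuous hinj hy
      (fun t ht => hne t ((hy t).trans ht.symm)) hφ).imp_right .inl)))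
  · exact .inr (.inr (.inr ((hF.hasClosedExtension_of_injective hj
      (NStar.injective_of_factorsThrough_finToLim hfac hne) hφ).imp_right .inr)))
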